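/- Let (x, y) : [0, ∞) → ℝ² be differentiable and satisfy x′ = y + x(1 − x² − y²), y′ = −x + y(1 − x² − y²) on [0, ∞), with x(0)² + y(0)² > 0. Then x(t)² + y(t)² → 1 as t → ∞; that is, every nonzero solution is attracted to the unit-circle limit cycle. -/

import Mathlib

open Filter

/-- Every solution of the logistic equation `u′ = 2u(1 − u)` that is nonnegative on `[0, ∞)`
is given there by the explicit formula, written without division. -/
theorem logistic_solution_formula {u : ℝ → ℝ}
    (hu : ∀ t : ℝ, 0 ≤ t → HasDerivAt u (2 * u t * (1 - u t)) t)
    (hnonneg : ∀ t : ℝ, 0 ≤ t → 0 ≤ u t) {t : ℝ} (ht : 0 ≤ t) :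
    u t * (1 + u 0 * (Real.exp (2 * t) - 1)) = u 0 * Real.exp (2 * t) := by
  have hexp (c s : ℝ) : HasDerivAt (fun s => Real.exp (c * s)) (Real.exp (c * s) * c) s := by
    simpa using ((hasDerivAt_id s).const_mul c).exp
  set F : ℝ → ℝ := fun s =>
    u s * (1 + u 0 * (Real.exp (2 * s) - 1)) - u 0 * Real.exp (2 * s) with hF
  have hFderiv (s : ℝ) (hs : 0 ≤ s) : HasDerivAt F (2 * (1 - u s) * F s) s := by
    have h := ((hu s hs).mul ((((hexp 2 s).sub_const 1).const_mul (u 0)).const_add 1)).sub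
      ((hexp 2 s).const_mul (u 0))
    refine h.congr_deriv ?_
    simp only [hF]
    ring
  have hGderiv (s : ℝ) (hs : 0 ≤ s) : HasDerivAt (fun s => F s ^ 2 * Real.exp (-4 * s))
      (-(4 * u s * (F s ^ 2 * Real.exp (-4 * s)))) s := by
    refine (((hFderiv s hs).pow 2).mul (hexp (-4) s)).congr_deriv ?_
    simp only [Pi.pow_apply]
    push_cast
    ring
  have hanti : AntitoneOn (fun s => F s ^ 2 * Real.exp (-4 * s)) (Set.Ici 0) := by
    refine antitoneOn_of_hasDerivWithinAt_nonpos (convex_Ici 0)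
      (fun s hs => (hGderiv s hs).continuousAt.continuousWithinAt)
      (fun s hs => (hGderiv s (interior_subset hs)).hasDerivWithinAt) fun s hs => ?_
    have := hnonneg s (interior_subset hs)
    exact neg_nonpos.mpr (by positivity)
  have hle : F t ^ 2 * Real.exp (-4 * t) ≤ 0 := by
    simpa [hF] using hanti Set.self_mem_Ici ht ht
  have hFt : F t = 0 :=
    pow_eq_zero_iff two_ne_zero |>.mp
      (le_antisymm (nonpos_of_mul_nonpos_left hle (Real.exp_pos _)) (sq_nonneg _))
  exact sub_eq_zero.mp hFt

/-- Solutions of the logistic equation `u′ = 2u(1 − u)` that are nonnegative on `[0, ∞)` and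
start at a positive value tend to `1`. -/
theorem logistic_tendsto_one {u : ℝ → ℝ}
    (hu : ∀ t : ℝ, 0 ≤ t → HasDerivAt u (2 * u t * (1 - u t)) t)
    (hnonneg : ∀ t : ℝ, 0 ≤ t → 0 ≤ u t) (h0 : 0 < u 0) :
    Tendsto u atTop (nhds 1) := by
  have hexp : Tendsto (fun t : ℝ => Real.exp (-(2 * t))) atTop (nhds 0) :=
    Real.tendsto_exp_neg_atTop_nhds_zero.comp (tendsto_id.const_mul_atTop two_pos)
  have hlim : Tendsto (fun t : ℝ => u 0 / (u 0 + (1 - u 0) * Real.exp (-(2 * t)))) atTop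
      (nhds 1) := by
    have h := (tendsto_const_nhds (x := u 0)).div ((hexp.const_mul (1 - u 0)).const_add (u 0))
      (by simpa using h0.ne')
    simpa [h0.ne', Pi.div_def] using h
  refine hlim.congr' ?_
  filter_upwards [eventually_ge_atTop 0] with t ht
  have hformula := logistic_solution_formula hu hnonneg ht
  have hden : 0 < u 0 + (1 - u 0) * Real.exp (-(2 * t)) := by
    have : Real.exp (-(2 * t)) ≤ 1 := Real.exp_le_one_iff.mpr (by linarith)
    nlinarith [Real.exp_pos (-(2 * t))]
  rw [div_eq_iff hden.ne', Real.exp_neg]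
  field_simp
  linarith

/-- every nonzero solution of `x′ = y + x(1 − x² − y²)`,
`y′ = −x + y(1 − x² − y²)` on `[0, ∞)` is attracted to the unit-circle limit
cycle: `x(t)² + y(t)² → 1` as `t → ∞`. -/
theorem attracted_to_unit_circle (x y : ℝ → ℝ)
    (hx : ∀ t : ℝ, 0 ≤ t →
      HasDerivAt x (y t + x t * (1 - x t ^ 2 - y t ^ 2)) t)
    (hy : ∀ t : ℝ, 0 ≤ t →
      HasDerivAt y (-x t + y t * (1 - x t ^ 2 - y t ^ 2)) t)
    (h0 : 0 < x 0 ^ 2 + y 0 ^ 2) :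
    Tendsto (fun t => x t ^ 2 + y t ^ 2) atTop (nhds 1) := by
  refine logistic_tendsto_one (fun t ht => ?_) (fun t _ => by positivity) h0
  refine (((hx t ht).pow 2).add ((hy t ht).pow 2)).congr_deriv ?_
  push_cast
  ring
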